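/- Squared Bayes-risk gap of a single in-modal classifier bounded by conditional mutual information (step in the Out-of-Modal proof): Let h* be pointwise Bayes optimal given (X_1, X_2, X^O) and h_1* pointwise Bayes optimal given X_1, both assumed to exist as measurable functions. Then (L(h_1*) − L(h*))² ≤ I((X_2, X^O); Y | X_1). -/

import Mathlib

open MeasureTheory ProbabilityTheory
open scoped ENNReal

-- Kullback–Leibler divergence between two measures: `∫ log(dp/dq) dp` when `p ≪ q` and the
-- log-likelihood ratio is integrable, and `∞` otherwise.
open Classical in
noncomputable def klDiv {α : Type*} [MeasurableSpace α] (p q : Measure α) : ℝ≥0∞ :=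
  if p ≪ q ∧ Integrable (llr p q) p then ENNReal.ofReal (∫ x, llr p q x ∂p) else ⊤

/-- Conditional mutual information `I(U; Y | W)`: the expectation over `(W, U)` of the
Kullback–Leibler divergence `KL(P_{Y | W, U} ‖ P_{Y | W})` between the conditional
distributions of `Y`. -/
noncomputable def condMutualInfo {Ωs 𝒴 β γ : Type*} [MeasurableSpace Ωs] [MeasurableSpace 𝒴]
    [StandardBorelSpace 𝒴] [Nonempty 𝒴] [MeasurableSpace β] [MeasurableSpace γ]
    (P : Measure Ωs) [IsFiniteMeasure P] (U : Ωs → β) (Y : Ωs → 𝒴) (W : Ωs → γ) : ℝ≥0∞ :=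
  ∫⁻ x, klDiv (condDistrib Y (fun ω => (W ω, U ω)) P (W x, U x))
      (condDistrib Y W P (W x)) ∂P

/-- A classifier `h` is (pointwise) Bayes optimal given `W` if for almost every value `w` of
`W`, `h w` minimizes the conditional expected loss `E[ℓ(·, Y) | W = w]`. -/
def BayesOptimal {Ωs 𝒴 γ Yhat : Type*} [MeasurableSpace Ωs] [MeasurableSpace 𝒴]
    [StandardBorelSpace 𝒴] [Nonempty 𝒴] [MeasurableSpace γ]
    (P : Measure Ωs) [IsFiniteMeasure P] (ℓ : Yhat → 𝒴 → ℝ)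
    (Y : Ωs → 𝒴) (W : Ωs → γ) (h : γ → Yhat) : Prop :=
  ∀ᵐ w ∂(P.map W), ∀ yhat, ∫ y, ℓ (h w) y ∂(condDistrib Y W P w)
      ≤ ∫ y, ℓ yhat y ∂(condDistrib Y W P w)

/-- The risk `L(h) := E[ℓ(h(W), Y)]` of a classifier `h` based on the information `W`. -/
noncomputable def risk {Ωs 𝒴 γ Yhat : Type*} [MeasurableSpace Ωs]
    (P : Measure Ωs) (ℓ : Yhat → 𝒴 → ℝ) (Y : Ωs → 𝒴) (W : Ωs → γ) (h : γ → Yhat) : ℝ :=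
  ∫ x, ℓ (h (W x)) (Y x) ∂P

open InformationTheory in
lemma aux_pinsker {α : Type*} [MeasurableSpace α] (p q : Measure α) [IsProbabilityMeasure p]
    [IsProbabilityMeasure q] (f : α → ℝ) (hf : Measurable f)
    (hf01 : ∀ y, f y ∈ Set.Icc (0 : ℝ) 1) :
    ENNReal.ofReal ((∫ y, f y ∂q - ∫ y, f y ∂p) ^ 2) ≤ _root_.klDiv p q := by
  unfold _root_.klDiv
  split_ifs with h
  swap
  · exact le_top
  obtain ⟨hac, hint⟩ := h
  apply ENNReal.ofReal_le_ofReal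
  have hkl := integral_klFun_rnDeriv hac hint
  simp only [probReal_univ, add_sub_cancel_right] at hkl
  rw [← hkl]
  set m := ∫ y, f y ∂q with hm
  set n := ∫ y, f y ∂p with hn
  have hfp : Integrable f p := Integrable.of_mem_Icc 0 1 hf.aemeasurable (.of_forall hf01)
  have hsg := hasSubgaussianMGF_of_mem_Icc (μ := q) (X := f) hf.aemeasurable (.of_forall hf01)
  rw [← hm] at hsg
  set t := 4 * (n - m) with ht
  have hexp := hsg.integrable_exp_mul t
  have hmgf := hsg.mgf_le t
  simp only [mgf, sub_zero, nnnorm_one] at hmgf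
  have hgp : Integrable (fun y => t * (f y - m) - t ^ 2 / 8) p := by fun_prop
  have hgq : Integrable (fun y => (p.rnDeriv q y).toReal • (t * (f y - m) - t ^ 2 / 8)) q :=
    (integrable_rnDeriv_smul_iff hac).mpr hgp
  have hgi := integral_rnDeriv_smul (f := fun y => t * (f y - m) - t ^ 2 / 8) hac
  have hgv : ∫ y, (t * (f y - m) - t ^ 2 / 8) ∂p = t * (n - m) - t ^ 2 / 8 := by
    rw [integral_sub (by fun_prop) (by fun_prop), integral_const_mul,
      integral_sub (by fun_prop) (by fun_prop)]
    simp [hn]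
  have hE : Integrable (fun y => Real.exp (t * (f y - m)) * Real.exp (-(t ^ 2 / 8))) q :=
    hexp.mul_const _
  have hEv : ∫ y, Real.exp (t * (f y - m)) * Real.exp (-(t ^ 2 / 8)) ∂q ≤ 1 := by
    rw [integral_mul_const]
    calc _ ≤ Real.exp (t ^ 2 / 8) * Real.exp (-(t ^ 2 / 8)) := by
          gcongr
          refine hmgf.trans (le_of_eq ?_)
          congr 1
          push_cast
          ring
      _ = 1 := by rw [← Real.exp_add]; simp
  have hpt : ∀ y, (p.rnDeriv q y).toReal • (t * (f y - m) - t ^ 2 / 8)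
      - Real.exp (t * (f y - m)) * Real.exp (-(t ^ 2 / 8)) + 1
      ≤ klFun (p.rnDeriv q y).toReal := by
    intro y
    rw [← Real.exp_add, ← sub_eq_add_neg, smul_eq_mul]
    generalize t * (f y - m) - t ^ 2 / 8 = g
    have hx : 0 ≤ (p.rnDeriv q y).toReal := ENNReal.toReal_nonneg
    generalize (p.rnDeriv q y).toReal = x at hx
    unfold klFun
    rcases hx.eq_or_lt with rfl | hx
    · simp [Real.exp_nonneg]
    · have h1 := Real.add_one_le_exp (g - Real.log x)
      rw [Real.exp_sub, Real.exp_log hx, le_div_iff₀ hx] at h1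
      nlinarith
  have hI := integral_mono (((hgq.sub hE).add (integrable_const 1)))
    ((integrable_klFun_rnDeriv_iff hac).mpr hint) hpt
  have hL : ∫ y, ((p.rnDeriv q y).toReal • (t * (f y - m) - t ^ 2 / 8)
      - Real.exp (t * (f y - m)) * Real.exp (-(t ^ 2 / 8)) + 1) ∂q
      = (t * (n - m) - t ^ 2 / 8)
        - ∫ y, Real.exp (t * (f y - m)) * Real.exp (-(t ^ 2 / 8)) ∂q + 1 := by
    have hge : Integrable (fun y => (p.rnDeriv q y).toReal • (t * (f y - m) - t ^ 2 / 8)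
      - Real.exp (t * (f y - m)) * Real.exp (-(t ^ 2 / 8))) q := hgq.sub hE
    rw [integral_add hge (integrable_const 1), integral_sub hgq hE, hgi, hgv]
    simp
  have hI' := hL.symm.le.trans hI
  rw [ht] at hI' hEv
  nlinarith [sq_nonneg (n - m)]

lemma aux_risk {Ωs 𝒴 γ : Type*} [MeasurableSpace Ωs] [MeasurableSpace 𝒴]
    [StandardBorelSpace 𝒴] [Nonempty 𝒴] [MeasurableSpace γ]
    (P : Measure Ωs) [IsProbabilityMeasure P]
    (F : γ → 𝒴 → ℝ) (hF : Measurable (Function.uncurry F))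
    (hF01 : ∀ w y, F w y ∈ Set.Icc (0 : ℝ) 1)
    (W : Ωs → γ) (Y : Ωs → 𝒴) (hW : Measurable W) (hY : Measurable Y) :
    ∫ x, F (W x) (Y x) ∂P = ∫ x, ∫ y, F (W x) y ∂(condDistrib Y W P (W x)) ∂P := by
  have h1 : ∫ x, F (W x) (Y x) ∂P
      = ∫ z, Function.uncurry F z ∂(P.map fun a => (W a, Y a)) := by
    rw [integral_map (by fun_prop) hF.aestronglyMeasurable]
    rfl
  have : IsProbabilityMeasure (P.map W) := Measure.isProbabilityMeasure_map hW.aemeasurable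
  rw [h1, ← compProd_map_condDistrib hY.aemeasurable, Measure.integral_compProd, integral_map hW.aemeasurable]
  · rfl
  · exact (hF.stronglyMeasurable.integral_kernel_prod_right'
      (κ := condDistrib Y W P)).aestronglyMeasurable
  · exact Integrable.of_mem_Icc 0 1 hF.aemeasurable (.of_forall fun z => hF01 z.1 z.2)

lemma aux_mem {α : Type*} [MeasurableSpace α] (p : Measure α) [IsProbabilityMeasure p]
    (f : α → ℝ) (hf : Measurable f) (hf01 : ∀ y, f y ∈ Set.Icc (0 : ℝ) 1) :
    ∫ y, f y ∂p ∈ Set.Icc (0 : ℝ) 1 := by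
  have hfp : Integrable f p := Integrable.of_mem_Icc 0 1 hf.aemeasurable (.of_forall hf01)
  refine ⟨integral_nonneg fun y => (hf01 y).1, ?_⟩
  have := integral_mono hfp (integrable_const 1) (fun y => (hf01 y).2)
  simpa using this

/-- **Squared Bayes-risk gap of a single in-modal classifier bounded by conditional mutual
information (step in the Out-of-Modal proof).** -/
theorem oom_single_modal_squared_gap_le_info
    {Ωs 𝒴 Yhat β₁ β₂ βO : Type*} [MeasurableSpace Ωs] [MeasurableSpace 𝒴]
    [StandardBorelSpace 𝒴] [Nonempty 𝒴] [MeasurableSpace Yhat]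
    [MeasurableSpace β₁] [MeasurableSpace β₂] [MeasurableSpace βO]
    (P : Measure Ωs) [IsProbabilityMeasure P]
    (ℓ : Yhat → 𝒴 → ℝ) (hℓmeas : Measurable (Function.uncurry ℓ))
    (hℓ01 : ∀ yhat y, ℓ yhat y ∈ Set.Icc (0 : ℝ) 1)
    (X₁ : Ωs → β₁) (X₂ : Ωs → β₂) (XO : Ωs → βO) (Y : Ωs → 𝒴)
    (hX₁ : Measurable X₁) (hX₂ : Measurable X₂) (hXO : Measurable XO) (hYm : Measurable Y)
    (hstar : β₁ × β₂ × βO → Yhat) (h1 : β₁ → Yhat)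
    (hstarm : Measurable hstar) (h1m : Measurable h1)
    (hBstar : BayesOptimal P ℓ Y (fun x => (X₁ x, X₂ x, XO x)) hstar)
    (hB1 : BayesOptimal P ℓ Y X₁ h1) :
    ENNReal.ofReal ((risk P ℓ Y X₁ h1
          - risk P ℓ Y (fun x => (X₁ x, X₂ x, XO x)) hstar) ^ 2)
      ≤ condMutualInfo P (fun x => (X₂ x, XO x)) Y X₁ := by
  have hWm : Measurable (fun x => (X₁ x, X₂ x, XO x)) := by fun_prop
  set W : Ωs → β₁ × β₂ × βO := fun x => (X₁ x, X₂ x, XO x) with hWdef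
  let p : Kernel (β₁ × β₂ × βO) 𝒴 := condDistrib Y W P
  let q : Kernel (β₁ × β₂ × βO) 𝒴 := (condDistrib Y X₁ P).comap Prod.fst measurable_fst
  have hq : IsMarkovKernel q := by infer_instance
  have hp : IsMarkovKernel p := by infer_instance
  have hF1 : Measurable (Function.uncurry fun (w : β₁) y => ℓ (h1 w) y) :=
    hℓmeas.comp ((h1m.comp measurable_fst).prodMk measurable_snd)
  have hF1' : Measurable (Function.uncurry fun (w : β₁ × β₂ × βO) y => ℓ (h1 w.1) y) :=
    hℓmeas.comp ((h1m.comp (measurable_fst.comp measurable_fst)).prodMk measurable_snd)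
  have hFs : Measurable (Function.uncurry fun (w : β₁ × β₂ × βO) y => ℓ (hstar w) y) :=
    hℓmeas.comp ((hstarm.comp measurable_fst).prodMk measurable_snd)
  have key : ∀ (κ : Kernel (β₁ × β₂ × βO) 𝒴) [IsMarkovKernel κ]
      (F : β₁ × β₂ × βO → 𝒴 → ℝ), Measurable (Function.uncurry F) →
      (∀ w y, F w y ∈ Set.Icc (0 : ℝ) 1) →
      Measurable (fun x => ∫ y, F (W x) y ∂(κ (W x))) ∧
      (∀ x, ∫ y, F (W x) y ∂(κ (W x)) ∈ Set.Icc (0 : ℝ) 1) ∧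
      Integrable (fun x => ∫ y, F (W x) y ∂(κ (W x))) P := by
    intro κ _ F hF h01
    have a1 : Measurable (fun x => ∫ y, F (W x) y ∂(κ (W x))) :=
      (hF.stronglyMeasurable.integral_kernel_prod_right' (κ := κ)).measurable.comp hWm
    have a2 : ∀ x, ∫ y, F (W x) y ∂(κ (W x)) ∈ Set.Icc (0 : ℝ) 1 := fun x =>
      aux_mem _ _ (hF.comp measurable_prodMk_left) (h01 _)
    exact ⟨a1, a2, Integrable.of_mem_Icc 0 1 a1.aemeasurable (.of_forall a2)⟩
  obtain ⟨mA, bA, iA⟩ := key q _ hFs (fun w y => hℓ01 _ _)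
  obtain ⟨mB, bB, iB⟩ := key p _ hFs (fun w y => hℓ01 _ _)
  obtain ⟨-, -, iC⟩ := key q _ hF1' (fun w y => hℓ01 _ _)
  obtain ⟨-, -, iE⟩ := key p _ hF1' (fun w y => hℓ01 _ _)
  have r1 : risk P ℓ Y X₁ h1 = ∫ x, ∫ y, ℓ (h1 (W x).1) y ∂(q (W x)) ∂P :=
    aux_risk P (fun (w : β₁) y => ℓ (h1 w) y) hF1 (fun _ _ => hℓ01 _ _) X₁ Y hX₁ hYm
  have r1' : risk P ℓ Y X₁ h1 = ∫ x, ∫ y, ℓ (h1 (W x).1) y ∂(p (W x)) ∂P :=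
    aux_risk P (fun (w : β₁ × β₂ × βO) y => ℓ (h1 w.1) y) hF1'
      (fun _ _ => hℓ01 _ _) W Y hWm hYm
  have r2 : risk P ℓ Y W hstar = ∫ x, ∫ y, ℓ (hstar (W x)) y ∂(p (W x)) ∂P :=
    aux_risk P (fun (w : β₁ × β₂ × βO) y => ℓ (hstar w) y) hFs
      (fun _ _ => hℓ01 _ _) W Y hWm hYm
  have o1 := ae_of_ae_map hX₁.aemeasurable hB1
  have o2 := ae_of_ae_map hWm.aemeasurable hBstar
  have g0 : risk P ℓ Y W hstar ≤ risk P ℓ Y X₁ h1 := by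
    rw [r2, r1']
    apply integral_mono_ae iB iE
    filter_upwards [o2] with x hx using hx _
  have g1 : risk P ℓ Y X₁ h1 ≤ ∫ x, ∫ y, ℓ (hstar (W x)) y ∂(q (W x)) ∂P := by
    rw [r1]
    apply integral_mono_ae iC iA
    filter_upwards [o1] with x hx using hx _
  set s := risk P ℓ Y X₁ h1 - risk P ℓ Y W hstar with hs
  set A : Ωs → ℝ := fun x => ∫ y, ℓ (hstar (W x)) y ∂(q (W x)) with hA
  set B : Ωs → ℝ := fun x => ∫ y, ℓ (hstar (W x)) y ∂(p (W x)) with hB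
  have iD : Integrable (fun x => (A x - B x) ^ 2) P := by
    refine Integrable.of_mem_Icc 0 1 ((mA.sub mB).pow_const 2).aemeasurable (.of_forall fun x => ?_)
    have h1 := bA x
    have h2 := bB x
    change A x ∈ _ at h1
    change B x ∈ _ at h2
    obtain ⟨h1, h1'⟩ := h1
    obtain ⟨h2, h2'⟩ := h2
    exact ⟨sq_nonneg _, by nlinarith⟩
  have hsD : s ≤ ∫ x, (A x - B x) ∂P := by
    rw [integral_sub iA iB]
    have : risk P ℓ Y W hstar = ∫ x, B x ∂P := r2
    have : risk P ℓ Y X₁ h1 ≤ ∫ x, A x ∂P := g1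
    linarith
  have hs0 : 0 ≤ s := sub_nonneg.mpr g0
  have hmain : s ^ 2 ≤ ∫ x, (A x - B x) ^ 2 ∂P := by
    have iAB : Integrable (fun x => A x - B x) P := iA.sub iB
    have hj := integral_mono ((iAB.const_mul (2 * s)).sub (integrable_const (s ^ 2))) iD
      (fun x => by
        change 2 * s * (A x - B x) - s ^ 2 ≤ (A x - B x) ^ 2
        nlinarith [sq_nonneg (A x - B x - s)])
    have hv : ∫ x, (2 * s * (A x - B x) - s ^ 2) ∂P = 2 * s * ∫ x, (A x - B x) ∂P - s ^ 2 := by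
      rw [integral_sub (iAB.const_mul (2 * s)) (integrable_const (s ^ 2)), integral_const_mul]
      simp
    have hj' := hv.symm.le.trans hj
    nlinarith
  calc ENNReal.ofReal (s ^ 2) ≤ ENNReal.ofReal (∫ x, (A x - B x) ^ 2 ∂P) :=
        ENNReal.ofReal_le_ofReal hmain
    _ = ∫⁻ x, ENNReal.ofReal ((A x - B x) ^ 2) ∂P :=
        ofReal_integral_eq_lintegral_ofReal iD (.of_forall fun x => sq_nonneg _)
    _ ≤ _ := by
        unfold condMutualInfo
        refine lintegral_mono fun x => ?_
        exact aux_pinsker (p (W x)) (q (W x)) (fun y => ℓ (hstar (W x)) y)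
          (hFs.comp measurable_prodMk_left) (fun y => hℓ01 _ _)
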